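/- Let d ∈ ℕ, K = (K_1,...,K_d) ∈ ℕ₀^d, and let f : ℝ^d → ℝ be continuous, 2π-periodic in each variable, and possess continuous partial derivatives ∂_j^{K_j} f for each j. Then there exists a constant C_K > 0 depending only on K (not on f) such that for every N = (N_1,...,N_d) ∈ ℕ^d there exists a multivariate trigonometric polynomial T of coordinate-wise degree at most (⌈(K_j+3)/2⌉⌊N_j/2⌋)_{j=1,...,d} satisfying sup_{x∈ℝ^d} |f(x) − T(x)| ≤ C_K ∑_{j=1}^d ω_{∂_j^{K_j} f}(1/N_j) / N_j^{K_j}. -/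

import Mathlib

open Complex Real

/-- Partial derivative in the `j`-th variable of `g : ℝ^d → ℝ`. -/
noncomputable def partialDerivVar {d : ℕ} (j : Fin d) (g : (Fin d → ℝ) → ℝ) :
    (Fin d → ℝ) → ℝ :=
  fun x => deriv (fun s => g (Function.update x j s)) (x j)

/-- Global modulus of continuity of `g : ℝ^d → ℝ` (shifts of norm `< δ`). -/
noncomputable def modulusOfContinuityMulti {d : ℕ} (g : (Fin d → ℝ) → ℝ) (δ : ℝ) : ℝ :=
  sSup {y : ℝ | ∃ x t : Fin d → ℝ, ‖t‖ < δ ∧ y = |g (x + t) - g x|}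

/-!
Let `J` be a power of the Fejér kernel, normalized to mass one. Averaging against `J(t)` the
extrapolations of `f(x)` from the values `f(x + k t e)`, `1 ≤ k ≤ K + 1`, leaves as error an average
of `(K + 1)`-th differences of `f` in the direction `e`; each of these is at most `|t|^K` times an
oscillation of the `K`-th derivative, and the moments of `J` turn this into `ω(1/N) / N^K`.

A frequency `m` of `J` meets the dilated values `f(x + k t e)` in a function that vanishes unless
`k ∣ m`, in which case it has the pure frequency `-m / k` along `e`. Hence the average is a
trigonometric polynomial along `e`, of degree at most that of `J`, and it keeps whatever frequencies
`f` already has in the other directions. So the averages can be taken in one coordinate after the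
other: each adds its own error and multiplies the previous ones by the norm of the operator.
-/

section TrigonometricPolynomials

/-- Trigonometric polynomials of degree at most `D` in one real variable. -/
noncomputable def trigPolyLE (D : ℤ) : Submodule ℂ (ℝ → ℂ) :=
  Submodule.span ℂ ((fun (n : ℤ) (t : ℝ) => Complex.exp (I * n * t)) '' Set.Icc (-D) D)

lemma exists_coeff_of_mem_trigPolyLE {D : ℤ} {φ : ℝ → ℂ} (hφ : φ ∈ trigPolyLE D) :
    ∃ a : ℤ → ℂ, ∀ t, φ t = ∑ n ∈ Finset.Icc (-D) D, a n * Complex.exp (I * n * t) := by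
  rw [trigPolyLE, ← Finset.coe_Icc, Submodule.mem_span_image_finset_iff_exists_fun'] at hφ
  obtain ⟨a, rfl⟩ := hφ
  exact ⟨a, fun t => by simp only [Finset.sum_apply, Pi.smul_apply, smul_eq_mul]⟩

lemma mul_mem_trigPolyLE {D₁ D₂ : ℤ} {φ ψ : ℝ → ℂ} (hφ : φ ∈ trigPolyLE D₁)
    (hψ : ψ ∈ trigPolyLE D₂) : φ * ψ ∈ trigPolyLE (D₁ + D₂) := by
  have hmul := Submodule.mul_mem_mul hφ hψ
  rw [trigPolyLE, trigPolyLE, Submodule.span_mul_span] at hmul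
  refine Submodule.span_mono ?_ hmul
  rintro _ ⟨_, ⟨n, ⟨hn, hn'⟩, rfl⟩, _, ⟨m, ⟨hm, hm'⟩, rfl⟩, rfl⟩
  refine ⟨n + m, ⟨by linarith, by linarith⟩, ?_⟩
  funext t
  simp only [Pi.mul_apply, ← Complex.exp_add]
  congr 1
  push_cast
  ring

lemma pow_mem_trigPolyLE {D : ℤ} {φ : ℝ → ℂ} (hφ : φ ∈ trigPolyLE D) (r : ℕ) :
    φ ^ r ∈ trigPolyLE (r * D) := by
  induction r with
  | zero => exact Submodule.subset_span ⟨0, by simp, by funext t; simp⟩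
  | succ r ih =>
    rw [pow_succ, Nat.cast_succ, add_one_mul]
    exact mul_mem_trigPolyLE ih hφ

end TrigonometricPolynomials

section JacksonKernel

/-- The one-sided Dirichlet sum `∑_{l < m} e^{ilt}`. -/
noncomputable def dirichletSum (m : ℕ) (t : ℝ) : ℂ :=
  ∑ l ∈ Finset.range m, Complex.exp (I * t) ^ l

@[fun_prop]
lemma continuous_dirichletSum (m : ℕ) : Continuous (dirichletSum m) := by
  unfold dirichletSum
  fun_prop

lemma norm_dirichletSum_sq_mem_trigPolyLE (m : ℕ) :
    (fun t => ((‖dirichletSum (m + 1) t‖ ^ 2 : ℝ) : ℂ)) ∈ trigPolyLE m := by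
  have hexpand : (fun t => ((‖dirichletSum (m + 1) t‖ ^ 2 : ℝ) : ℂ)) =
      ∑ k ∈ Finset.range (m + 1), ∑ l ∈ Finset.range (m + 1),
        fun t : ℝ => Complex.exp (I * ((k - l : ℤ) : ℂ) * t) := by
    funext t
    rw [Complex.ofReal_pow, ← Complex.mul_conj']
    simp only [dirichletSum, map_sum, Finset.sum_mul_sum, Finset.sum_apply]
    refine Finset.sum_congr rfl fun k _ => Finset.sum_congr rfl fun l _ => ?_
    rw [map_pow, ← Complex.exp_conj, ← Complex.exp_nat_mul, ← Complex.exp_nat_mul,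
      ← Complex.exp_add]
    congr 1
    simp only [map_mul, conj_I, conj_ofReal]
    push_cast
    ring
  rw [hexpand]
  refine Submodule.sum_mem _ fun k hk => Submodule.sum_mem _ fun l hl =>
    Submodule.subset_span ⟨(k : ℤ) - l, ?_, rfl⟩
  simp only [Finset.mem_range, Set.mem_Icc] at hk hl ⊢
  omega

lemma norm_dirichletSum_le (m : ℕ) (t : ℝ) : ‖dirichletSum m t‖ ≤ m := by
  simpa [dirichletSum, norm_pow, norm_exp_I_mul_ofReal] using
    norm_sum_le (Finset.range m) fun l => Complex.exp (I * t) ^ l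

lemma norm_dirichletSum_mul_abs_le (m : ℕ) {t : ℝ} (ht : |t| ≤ π) :
    ‖dirichletSum m t‖ * |t| ≤ π := by
  have hgeom : ‖dirichletSum m t‖ * ‖Complex.exp (I * t) - 1‖ ≤ 2 := by
    rw [← norm_mul, dirichletSum, geom_sum_mul]
    refine (norm_sub_le _ _).trans ?_
    rw [norm_pow, norm_exp_I_mul_ofReal, one_pow, norm_one]
    norm_num
  have hchord : 2 / π * |t| ≤ ‖Complex.exp (I * t) - 1‖ := by
    have hsin : 2 / π * |t / 2| ≤ |Real.sin (t / 2)| := by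
      apply Real.mul_abs_le_abs_sin
      rw [abs_div, abs_two]
      linarith
    rw [abs_div, abs_two] at hsin
    rw [norm_exp_I_mul_ofReal_sub_one, norm_mul, Real.norm_eq_abs, Real.norm_eq_abs, abs_two]
    linarith
  calc ‖dirichletSum m t‖ * |t| = π / 2 * (‖dirichletSum m t‖ * (2 / π * |t|)) := by field_simp
    _ ≤ π / 2 * (‖dirichletSum m t‖ * ‖Complex.exp (I * t) - 1‖) := by gcongr
    _ ≤ π / 2 * 2 := by gcongr
    _ = π := by ring

lemma norm_dirichletSum_mul_one_add_le (m : ℕ) {t : ℝ} (ht : |t| ≤ π) :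
    ‖dirichletSum m t‖ * (1 + 2 * m * |t|) ≤ 9 * m :=
  calc ‖dirichletSum m t‖ * (1 + 2 * m * |t|)
      = ‖dirichletSum m t‖ + 2 * m * (‖dirichletSum m t‖ * |t|) := by ring
    _ ≤ m + 2 * m * 4 := by
        gcongr
        · exact norm_dirichletSum_le m t
        · exact (norm_dirichletSum_mul_abs_le m ht).trans Real.pi_le_four
    _ = 9 * m := by ring

lemma half_le_norm_dirichletSum {m : ℕ} {t : ℝ} (ht : m * |t| ≤ 1) :
    (m : ℝ) / 2 ≤ ‖dirichletSum m t‖ := by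
  have hterm : ∀ l ∈ Finset.range m, (1 / 2 : ℝ) ≤ (Complex.exp (I * t) ^ l).re := by
    intro l hl
    have hexp : Complex.exp (I * t) ^ l = Complex.exp ((l * t : ℝ) * I) := by
      rw [← Complex.exp_nat_mul]
      congr 1
      push_cast
      ring
    have hlt : |l * t| ≤ 1 := by
      have hlm : (l : ℝ) ≤ m := by exact_mod_cast (Finset.mem_range.mp hl).le
      rw [abs_mul, Nat.abs_cast]
      exact (mul_le_mul_of_nonneg_right hlm (abs_nonneg t)).trans ht
    rw [hexp, Complex.exp_ofReal_mul_I_re]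
    linarith [(sq_le_one_iff_abs_le_one _).mpr hlt, one_sub_sq_div_two_le_cos (x := l * t)]
  calc (m : ℝ) / 2 = ∑ _l ∈ Finset.range m, (1 / 2 : ℝ) := by
        rw [Finset.sum_const, Finset.card_range, nsmul_eq_mul]
        ring
    _ ≤ ∑ l ∈ Finset.range m, (Complex.exp (I * t) ^ l).re := Finset.sum_le_sum hterm
    _ = (dirichletSum m t).re := by rw [dirichletSum, Complex.re_sum]
    _ ≤ ‖dirichletSum m t‖ := Complex.re_le_norm _

lemma integral_norm_dirichletSum_pow_ge (p : ℕ) {m : ℕ} (hm : 0 < m) :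
    2 / m * ((m : ℝ) / 2) ^ p ≤ ∫ t in (-π)..π, ‖dirichletSum m t‖ ^ p := by
  have hm0 : (0 : ℝ) < m := Nat.cast_pos.mpr hm
  have hinv : 0 < (m : ℝ)⁻¹ := inv_pos.mpr hm0
  have hle : (m : ℝ)⁻¹ ≤ π :=
    (inv_le_one_of_one_le₀ (Nat.one_le_cast.mpr hm)).trans (by linarith [Real.pi_gt_three])
  have hint (a b : ℝ) : IntervalIntegrable (fun t => ‖dirichletSum m t‖ ^ p)
      MeasureTheory.volume a b := Continuous.intervalIntegrable (by fun_prop) a b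
  calc 2 / m * ((m : ℝ) / 2) ^ p = ∫ _t in (-(m : ℝ)⁻¹)..(m : ℝ)⁻¹, ((m : ℝ) / 2) ^ p := by
        rw [intervalIntegral.integral_const, smul_eq_mul]
        ring
    _ ≤ ∫ t in (-(m : ℝ)⁻¹)..(m : ℝ)⁻¹, ‖dirichletSum m t‖ ^ p := by
        refine intervalIntegral.integral_mono_on (by linarith)
          intervalIntegrable_const (hint _ _) fun t ht => ?_
        gcongr
        refine half_le_norm_dirichletSum ?_
        calc (m : ℝ) * |t| ≤ m * (m : ℝ)⁻¹ := by gcongr; exact abs_le.mpr ht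
          _ = 1 := mul_inv_cancel₀ hm0.ne'
    _ ≤ ∫ t in (-π)..π, ‖dirichletSum m t‖ ^ p :=
        intervalIntegral.integral_mono_interval (by linarith) (by linarith) hle
          (Filter.Eventually.of_forall fun t => by positivity) (hint _ _)

lemma integral_inv_one_add_mul_sq_le {c : ℝ} (hc : 0 < c) (a b : ℝ) :
    ∫ t in a..b, (1 + (c * t) ^ 2)⁻¹ ≤ π / c := by
  rw [intervalIntegral.integral_comp_mul_left (fun x : ℝ => (1 + x ^ 2)⁻¹) hc.ne',
    integral_inv_one_add_sq, smul_eq_mul, div_eq_inv_mul]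
  gcongr
  linarith [Real.arctan_lt_pi_div_two (c * b), Real.neg_pi_div_two_lt_arctan (c * a)]

lemma norm_dirichletSum_pow_mul_le {m p r : ℕ} (hp : p + 2 ≤ r) {b t : ℝ} (hb : 0 ≤ b)
    (hbm : b ≤ 2 * m) (ht : |t| ≤ π) :
    ‖dirichletSum m t‖ ^ r * (1 + b * |t|) ^ p ≤ (9 * m) ^ r * (1 + (m * t) ^ 2)⁻¹ := by
  have hmt : 0 ≤ m * |t| := by positivity
  have hsq : 1 + (m * t) ^ 2 ≤ (1 + 2 * m * |t|) ^ 2 := by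
    rw [mul_pow, ← sq_abs t]
    nlinarith
  have hone : 1 ≤ 1 + 2 * m * |t| := by linarith
  rw [← div_eq_mul_inv, le_div_iff₀ (by positivity)]
  calc ‖dirichletSum m t‖ ^ r * (1 + b * |t|) ^ p * (1 + (m * t) ^ 2)
      ≤ ‖dirichletSum m t‖ ^ r * (1 + 2 * m * |t|) ^ p * (1 + 2 * m * |t|) ^ 2 := by gcongr
    _ = ‖dirichletSum m t‖ ^ r * (1 + 2 * m * |t|) ^ (p + 2) := by ring
    _ ≤ ‖dirichletSum m t‖ ^ r * (1 + 2 * m * |t|) ^ r := by gcongr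
    _ = (‖dirichletSum m t‖ * (1 + 2 * m * |t|)) ^ r := by rw [mul_pow]
    _ ≤ (9 * m) ^ r :=
        pow_le_pow_left₀ (by positivity) (norm_dirichletSum_mul_one_add_le m ht) r

/-- The generalized Jackson kernel `|∑_{l < m} e^{ilt}|^{2r}`, normalized to have integral one over
a period. -/
noncomputable def jacksonKernel (r m : ℕ) (t : ℝ) : ℝ :=
  (∫ s in (-π)..π, ‖dirichletSum m s‖ ^ (2 * r))⁻¹ * ‖dirichletSum m t‖ ^ (2 * r)

@[fun_prop]
lemma continuous_jacksonKernel (r m : ℕ) : Continuous (jacksonKernel r m) := by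
  unfold jacksonKernel
  fun_prop

lemma integral_norm_dirichletSum_pow_pos (p : ℕ) {m : ℕ} (hm : 0 < m) :
    0 < ∫ t in (-π)..π, ‖dirichletSum m t‖ ^ p :=
  lt_of_lt_of_le (by positivity) (integral_norm_dirichletSum_pow_ge p hm)

lemma jacksonKernel_nonneg (r m : ℕ) (t : ℝ) : 0 ≤ jacksonKernel r m t := by
  have hmass : 0 ≤ ∫ s in (-π)..π, ‖dirichletSum m s‖ ^ (2 * r) :=
    intervalIntegral.integral_nonneg (by linarith [Real.pi_pos]) fun s _ => by positivity
  exact mul_nonneg (inv_nonneg.mpr hmass) (by positivity)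

lemma integral_jacksonKernel (r : ℕ) {m : ℕ} (hm : 0 < m) :
    ∫ t in (-π)..π, jacksonKernel r m t = 1 := by
  simp only [jacksonKernel, intervalIntegral.integral_const_mul]
  exact inv_mul_cancel₀ (integral_norm_dirichletSum_pow_pos (2 * r) hm).ne'

lemma jacksonKernel_mem_trigPolyLE (r m : ℕ) :
    (fun t => (jacksonKernel r (m + 1) t : ℂ)) ∈ trigPolyLE (r * m) := by
  convert! Submodule.smul_mem _
    (((∫ s in (-π)..π, ‖dirichletSum (m + 1) s‖ ^ (2 * r))⁻¹ : ℝ) : ℂ)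
    (pow_mem_trigPolyLE (norm_dirichletSum_sq_mem_trigPolyLE m) r) using 1
  funext t
  simp [jacksonKernel, pow_mul]

lemma integral_jacksonKernel_mul_le {m p r : ℕ} (hm : 0 < m) (hp : p + 2 ≤ 2 * r) {b : ℝ}
    (hb : 0 ≤ b) (hbm : b ≤ 2 * m) :
    ∫ t in (-π)..π, jacksonKernel r m t * (1 + b * |t|) ^ p ≤ 18 ^ (2 * r) * (π / 2) := by
  have hm0 : (0 : ℝ) < m := Nat.cast_pos.mpr hm
  have hmass := integral_norm_dirichletSum_pow_ge (2 * r) hm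
  have hmass_pos := integral_norm_dirichletSum_pow_pos (2 * r) hm
  have hcauchy : Continuous fun t : ℝ => (1 + (m * t) ^ 2)⁻¹ :=
    Continuous.inv₀ (by fun_prop) fun t => by positivity
  simp only [jacksonKernel, mul_assoc, intervalIntegral.integral_const_mul]
  rw [inv_mul_le_iff₀ hmass_pos]
  calc ∫ t in (-π)..π, ‖dirichletSum m t‖ ^ (2 * r) * (1 + b * |t|) ^ p
      ≤ ∫ t in (-π)..π, (9 * m : ℝ) ^ (2 * r) * (1 + (m * t) ^ 2)⁻¹ :=
        intervalIntegral.integral_mono_on (by linarith [Real.pi_pos])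
          (Continuous.intervalIntegrable (by fun_prop) _ _)
          (Continuous.intervalIntegrable (by fun_prop) _ _)
          fun t ht => norm_dirichletSum_pow_mul_le hp hb hbm (abs_le.mpr ht)
    _ ≤ (9 * m) ^ (2 * r) * (π / m) := by
        rw [intervalIntegral.integral_const_mul]
        gcongr
        exact integral_inv_one_add_mul_sq_le hm0 _ _
    _ = 2 / m * (m / 2) ^ (2 * r) * (18 ^ (2 * r) * (π / 2)) := by
        rw [show (9 * m : ℝ) = 18 * (m / 2) by ring, mul_pow]
        ring
    _ ≤ _ := by gcongr

end JacksonKernel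

section ForwardDifference

lemma sub_sum_smul_eq_fwdDiff_iter {M F : Type*} [AddCommMonoid M] [AddCommGroup F] [Module ℝ F]
    (h : M) (n : ℕ) (g : M → F) (x : M) :
    g x - ∑ k ∈ Finset.range n, ((-1) ^ k * n.choose (k + 1) : ℝ) • g (x + (k + 1) • h) =
      (-1 : ℝ) ^ n • (fwdDiff h)^[n] g x := by
  have hterm : ∀ k ∈ Finset.range (n + 1),
      (-1 : ℝ) ^ n • ((-1 : ℤ) ^ (n - k) * n.choose k) • g (x + k • h) =
        ((-1) ^ k * n.choose k : ℝ) • g (x + k • h) := by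
    intro k hk
    obtain ⟨l, rfl⟩ := Nat.exists_eq_add_of_le (Finset.mem_range_succ_iff.mp hk)
    rw [← Int.cast_smul_eq_zsmul ℝ, smul_smul, Nat.add_sub_cancel_left]
    congr 1
    push_cast
    rw [← mul_assoc, pow_add, mul_assoc ((-1 : ℝ) ^ k), ← mul_pow, neg_one_mul, neg_neg, one_pow,
      mul_one]
  rw [fwdDiff_iter_eq_sum_shift, Finset.smul_sum, Finset.sum_congr rfl hterm,
    Finset.sum_range_succ', add_comm, sub_eq_add_neg, ← Finset.sum_neg_distrib]
  simp [pow_succ]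

variable {E F : Type*} [AddCommGroup E] [Module ℝ E] [NormedAddCommGroup F]

lemma norm_fwdDiff_iter_le {M : Type*} [AddCommMonoid M] (h : M) (n : ℕ) {g : M → F} {B : ℝ}
    (hB : ∀ x, ‖g x‖ ≤ B) (x : M) : ‖(fwdDiff h)^[n] g x‖ ≤ 2 ^ n * B := by
  induction n generalizing x with
  | zero => simpa using hB x
  | succ n ih =>
    rw [Function.iterate_succ_apply', fwdDiff]
    calc _ ≤ 2 ^ n * B + 2 ^ n * B := (norm_sub_le _ _).trans (add_le_add (ih _) (ih _))
      _ = 2 ^ (n + 1) * B := by ring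

variable [NormedSpace ℝ F]

lemma hasLineDerivAt_fwdDiff {g g' : E → F} {v : E} (hg : ∀ x, HasLineDerivAt ℝ g (g' x) x v)
    (h x : E) : HasLineDerivAt ℝ (fwdDiff h g) (fwdDiff h g' x) x v := by
  have hsub := (hg (x + h)).sub (hg x)
  unfold HasLineDerivAt
  convert! hsub using 1
  funext t
  simp [fwdDiff, add_right_comm]

lemma norm_fwdDiff_smul_le {g g' : E → F} {v : E} (hg : ∀ x, HasLineDerivAt ℝ g (g' x) x v)
    {M : ℝ} (hM : ∀ x, ‖g' x‖ ≤ M) (t : ℝ) (x : E) : ‖fwdDiff (t • v) g x‖ ≤ |t| * M := by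
  have hderiv (s : ℝ) : HasDerivAt (fun u : ℝ => g (x + u • v)) (g' (x + s • v)) s := by
    have hshift := HasDerivAt.comp_sub_const s s (f := fun u : ℝ => g (x + s • v + u • v))
      (by simpa [HasLineDerivAt] using hg (x + s • v))
    simpa [add_assoc, ← add_smul] using hshift
  have hmv := convex_univ.norm_image_sub_le_of_norm_hasDerivWithin_le
    (fun s _ => (hderiv s).hasDerivWithinAt) (fun s _ => hM (x + s • v))
    (Set.mem_univ (0 : ℝ)) (Set.mem_univ t)
  simpa [fwdDiff, mul_comm] using hmv

lemma norm_fwdDiff_iter_smul_le {K : ℕ} {g : ℕ → E → F} {v : E}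
    (hg : ∀ k < K, ∀ x, HasLineDerivAt ℝ (g k) (g (k + 1) x) x v) {M : ℝ}
    (hM : ∀ x, ‖g K x‖ ≤ M) (t : ℝ) (x : E) : ‖(fwdDiff (t • v))^[K] (g 0) x‖ ≤ |t| ^ K * M := by
  induction K generalizing g M with
  | zero => simpa using hM x
  | succ K ih =>
    have hdiff := ih (g := fun k => fwdDiff (t • v) (g k))
      (fun k hk => hasLineDerivAt_fwdDiff (hg k (hk.trans K.lt_succ_self)) _)
      (norm_fwdDiff_smul_le (hg K K.lt_succ_self) hM t)
    rwa [← mul_assoc, ← pow_succ] at hdiff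

end ForwardDifference

section JacksonMean

variable {E F G : Type*} [AddCommGroup E] [Module ℝ E] [NormedAddCommGroup F] [NormedSpace ℝ F]
  [NormedAddCommGroup G] [NormedSpace ℝ G] {J : ℝ → ℝ} {e : E} {n : ℕ} {g h : E → F}

/-- Jackson's mean of `g` along `e` with weight `J`: the average over `t` of the value at `x`
extrapolated from `g(x + te), …, g(x + nte)`, so that it differs from `g(x)` by an average of
`n`-th differences of `g`. -/
noncomputable def jacksonMean (J : ℝ → ℝ) (e : E) (n : ℕ) (g : E → F) (x : E) : F :=
  ∫ t in (-π)..π, J t •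
    ∑ k ∈ Finset.range n, ((-1) ^ k * n.choose (k + 1) : ℝ) • g (x + (k + 1) • t • e)

lemma jacksonMean_smul {𝕜 : Type*} [RCLike 𝕜] [NormedSpace 𝕜 F] [SMulCommClass ℝ 𝕜 F] (c : 𝕜) :
    jacksonMean J e n (c • g) = c • jacksonMean J e n g := by
  funext x
  simp only [jacksonMean, Pi.smul_apply, smul_comm _ c, ← Finset.smul_sum,
    intervalIntegral.integral_smul]

lemma linearIsometry_comp_jacksonMean [CompleteSpace F] [CompleteSpace G] (L : F →ₗᵢ[ℝ] G) :
    L ∘ jacksonMean J e n g = jacksonMean J e n (L ∘ g) := by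
  funext x
  simp only [jacksonMean, Function.comp_apply, ← L.intervalIntegral_comp_comm, map_smul, map_sum]

variable [TopologicalSpace E] [ContinuousAdd E] [ContinuousSMul ℝ E]

lemma intervalIntegrable_jacksonMean (hJ : Continuous J) (hg : Continuous g) (x : E) (a b : ℝ) :
    IntervalIntegrable (fun t => J t •
      ∑ k ∈ Finset.range n, ((-1) ^ k * n.choose (k + 1) : ℝ) • g (x + (k + 1) • t • e))
      MeasureTheory.volume a b :=
  Continuous.intervalIntegrable (by fun_prop) a b

lemma jacksonMean_add (hJ : Continuous J) (hg : Continuous g) (hh : Continuous h) :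
    jacksonMean J e n (g + h) = jacksonMean J e n g + jacksonMean J e n h := by
  funext x
  rw [Pi.add_apply, jacksonMean, jacksonMean, jacksonMean,
    ← intervalIntegral.integral_add (intervalIntegrable_jacksonMean hJ hg x _ _)
      (intervalIntegrable_jacksonMean hJ hh x _ _)]
  simp only [Pi.add_apply, smul_add, Finset.sum_add_distrib]

lemma sub_jacksonMean_eq_integral_fwdDiff [CompleteSpace F] (hJ : Continuous J)
    (hJ1 : ∫ t in (-π)..π, J t = 1) (hg : Continuous g) (x : E) :
    g x - jacksonMean J e n g x =
      ∫ t in (-π)..π, J t • (-1 : ℝ) ^ n • (fwdDiff (t • e))^[n] g x := by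
  have hconst : g x = ∫ t in (-π)..π, J t • g x := by
    rw [intervalIntegral.integral_smul_const, hJ1, one_smul]
  conv_lhs => rw [hconst, jacksonMean]
  rw [← intervalIntegral.integral_sub (Continuous.intervalIntegrable (by fun_prop) _ _)
    (intervalIntegrable_jacksonMean hJ hg x _ _)]
  simp only [← smul_sub, sub_sum_smul_eq_fwdDiff_iter]

lemma norm_sub_jacksonMean_le [CompleteSpace F] (hJ : Continuous J) (hJ0 : ∀ t, 0 ≤ J t)
    (hJ1 : ∫ t in (-π)..π, J t = 1) (hg : Continuous g) {β : ℝ → ℝ} (hβ : Continuous β) {x : E}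
    (hgβ : ∀ t, ‖(fwdDiff (t • e))^[n] g x‖ ≤ β t) :
    ‖g x - jacksonMean J e n g x‖ ≤ ∫ t in (-π)..π, J t * β t := by
  rw [sub_jacksonMean_eq_integral_fwdDiff hJ hJ1 hg]
  refine intervalIntegral.norm_integral_le_of_norm_le (by linarith [Real.pi_pos])
    (Filter.Eventually.of_forall fun t _ => ?_) (Continuous.intervalIntegrable (by fun_prop) _ _)
  rw [norm_smul, norm_smul, norm_pow, norm_neg, norm_one, one_pow, one_mul,
    Real.norm_of_nonneg (hJ0 t)]
  exact mul_le_mul_of_nonneg_left (hgβ t) (hJ0 t)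

lemma norm_jacksonMean_le [CompleteSpace F] (hJ : Continuous J) (hJ0 : ∀ t, 0 ≤ J t)
    (hJ1 : ∫ t in (-π)..π, J t = 1) (hg : Continuous g) {B : ℝ} (hB : ∀ x, ‖g x‖ ≤ B) (x : E) :
    ‖jacksonMean J e n g x‖ ≤ (1 + 2 ^ n) * B := by
  have hdiff := norm_sub_jacksonMean_le hJ hJ0 hJ1 hg (continuous_const (y := 2 ^ n * B))
    (fun t => norm_fwdDiff_iter_le (t • e) n hB x)
  rw [intervalIntegral.integral_mul_const, hJ1, one_mul] at hdiff
  calc ‖jacksonMean J e n g x‖ = ‖g x - (g x - jacksonMean J e n g x)‖ := by rw [sub_sub_cancel]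
    _ ≤ B + 2 ^ n * B := (norm_sub_le _ _).trans (add_le_add (hB x) hdiff)
    _ = (1 + 2 ^ n) * B := by ring

end JacksonMean

section FourierModes

variable {E : Type*} [AddCommGroup E] [Module ℝ E] {e v : E} {g : E → ℂ}

/-- `h` is a pure Fourier mode of frequency `n` in the direction `e`. -/
def IsFourierMode (e : E) (n : ℤ) (h : E → ℂ) : Prop :=
  ∀ (x : E) (s : ℝ), h (x + s • e) = Complex.exp (I * n * s) * h x

/-- The Fourier coefficient of index `-m`, up to the factor `2π`, of the restriction
`t ↦ g (x + k t e)` of `g` to the line through `x` in the direction `e`. -/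
noncomputable def dilatedFourierCoeff (e : E) (k : ℕ) (m : ℤ) (g : E → ℂ) (x : E) : ℂ :=
  ∫ t in (-π)..π, Complex.exp (I * m * t) * g (x + k • t • e)

@[fun_prop]
lemma continuous_dilatedFourierCoeff [TopologicalSpace E] [ContinuousAdd E] [ContinuousSMul ℝ E]
    (hg : Continuous g) (e : E) (k : ℕ) (m : ℤ) : Continuous (dilatedFourierCoeff e k m g) := by
  unfold dilatedFourierCoeff
  apply intervalIntegral.continuous_parametric_intervalIntegral_of_continuous'
  unfold Function.uncurry
  fun_prop

lemma dilatedFourierCoeff_add {z : ℂ} (hv : ∀ x, g (x + v) = z * g x) (e : E) (k : ℕ) (m : ℤ)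
    (x : E) : dilatedFourierCoeff e k m g (x + v) = z * dilatedFourierCoeff e k m g x := by
  simp only [dilatedFourierCoeff, add_right_comm x v, hv, mul_left_comm _ z,
    intervalIntegral.integral_const_mul]

lemma periodic_dilatedFourierCoeff (hg : Function.Periodic g v) (e : E) (k : ℕ) (m : ℤ) :
    Function.Periodic (dilatedFourierCoeff e k m g) v := fun x => by
  rw [dilatedFourierCoeff_add (z := 1) (by simpa using hg), one_mul]

lemma IsFourierMode.dilatedFourierCoeff {n : ℤ} (hg : IsFourierMode v n g) (e : E) (k : ℕ)
    (m : ℤ) : IsFourierMode v n (dilatedFourierCoeff e k m g) :=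
  fun x s => dilatedFourierCoeff_add (fun y => hg y s) e k m x

lemma dilatedFourierCoeff_add_nsmul (hg : Function.Periodic g ((2 * π) • e)) (k : ℕ) (m : ℤ)
    (x : E) (s : ℝ) : dilatedFourierCoeff e k m g (x + k • s • e) =
      Complex.exp (-(I * m * s)) * dilatedFourierCoeff e k m g x := by
  let q : ℝ → ℂ := fun t => Complex.exp (I * m * t) * g (x + k • t • e)
  have hq : Function.Periodic q (2 * π) := by
    intro t
    have hexp : Complex.exp (I * m * (t + 2 * π : ℝ)) = Complex.exp (I * m * t) := by
      rw [← Complex.exp_periodic.int_mul m (I * m * t)]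
      congr 1
      push_cast
      ring
    simp only [q, hexp, add_smul, smul_add, ← add_assoc, hg.nsmul k _]
  have hshift (t : ℝ) : Complex.exp (I * m * t) * g (x + k • s • e + k • t • e) =
      Complex.exp (-(I * m * s)) * q (t + s) := by
    simp only [q]
    rw [← mul_assoc, ← Complex.exp_add, add_assoc x, ← smul_add, ← add_smul, add_comm s]
    congr 2
    push_cast
    ring
  have hperiod := hq.intervalIntegral_add_eq (-π + s) (-π)
  rw [show -π + s + 2 * π = π + s by ring, show -π + 2 * π = π by ring] at hperiod
  simp only [dilatedFourierCoeff, hshift]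
  rw [intervalIntegral.integral_const_mul, intervalIntegral.integral_comp_add_right q, hperiod]

lemma dilatedFourierCoeff_add_smul (hg : Function.Periodic g ((2 * π) • e)) {k : ℕ} (hk : 0 < k)
    (m : ℤ) (x : E) (s : ℝ) : dilatedFourierCoeff e k m g (x + s • e) =
      Complex.exp (-(I * m * s / k)) * dilatedFourierCoeff e k m g x := by
  have hscale : s • e = k • (s / k) • e := by
    rw [← Nat.cast_smul_eq_nsmul ℝ, smul_smul, mul_div_cancel₀ _ (by positivity)]
  rw [hscale, dilatedFourierCoeff_add_nsmul hg, ofReal_div, ofReal_natCast, mul_div_assoc]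

lemma isFourierMode_dilatedFourierCoeff (hg : Function.Periodic g ((2 * π) • e)) {k : ℕ}
    (hk : 0 < k) (q : ℤ) : IsFourierMode e (-q) (dilatedFourierCoeff e k (k * q) g) := by
  intro x s
  have hk0 : (k : ℂ) ≠ 0 := Nat.cast_ne_zero.mpr hk.ne'
  rw [dilatedFourierCoeff_add_smul hg hk]
  congr 2
  push_cast
  field_simp

lemma dilatedFourierCoeff_eq_zero (hg : Function.Periodic g ((2 * π) • e)) {k : ℕ} (hk : 0 < k)
    {m : ℤ} (hm : ¬ (k : ℤ) ∣ m) : dilatedFourierCoeff e k m g = 0 := by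
  funext x
  have hfix := dilatedFourierCoeff_add_smul hg hk m x (2 * π)
  rw [periodic_dilatedFourierCoeff hg e k m x] at hfix
  by_contra hx
  obtain ⟨n, hn⟩ := Complex.exp_eq_one_iff.mp ((mul_eq_right₀ hx).mp hfix.symm)
  have hk0 : (k : ℂ) ≠ 0 := Nat.cast_ne_zero.mpr hk.ne'
  refine hm ⟨-n, ?_⟩
  have hmn : (m : ℂ) = k * -n := by
    refine mul_right_cancel₀ Complex.two_pi_I_ne_zero ?_
    push_cast at hn
    field_simp at hn
    linear_combination -(2 * π * I) * hn
  exact_mod_cast hmn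

lemma jacksonMean_eq_sum [TopologicalSpace E] [ContinuousAdd E] [ContinuousSMul ℝ E] {J : ℝ → ℝ}
    {D : ℤ} {a : ℤ → ℂ}
    (ha : ∀ t, (J t : ℂ) = ∑ m ∈ Finset.Icc (-D) D, a m * Complex.exp (I * m * t))
    (e : E) (n : ℕ) (hg : Continuous g) :
    jacksonMean J e n g = ∑ m ∈ Finset.Icc (-D) D, ∑ k ∈ Finset.range n,
      (a m * ((-1) ^ k * n.choose (k + 1))) • dilatedFourierCoeff e (k + 1) m g := by
  funext x
  simp only [jacksonMean, Complex.real_smul, ha, Finset.sum_mul_sum, Finset.sum_apply,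
    Pi.smul_apply, smul_eq_mul, dilatedFourierCoeff, ← intervalIntegral.integral_const_mul]
  rw [intervalIntegral.integral_finsetSum
    fun m _ => Continuous.intervalIntegrable (by fun_prop) _ _]
  refine Finset.sum_congr rfl fun m _ => ?_
  rw [intervalIntegral.integral_finsetSum
    fun k _ => Continuous.intervalIntegrable (by fun_prop) _ _]
  refine Finset.sum_congr rfl fun k _ => intervalIntegral.integral_congr fun t _ => ?_
  push_cast
  ring

end FourierModes
section PartialTrigonometricPolynomials

variable {E ι : Type*} [AddCommGroup E] [Module ℝ E] [TopologicalSpace E]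
  {e : ι → E} {D : ι → ℤ} {S : Finset ι} {j : ι} {g : E → ℂ}

/-- Continuous functions that are `2π`-periodic in every direction `e i` and, for each `i ∈ S`, a
Fourier mode of frequency at most `D i` in the direction `e i`. -/
def partialModes (e : ι → E) (D : ι → ℤ) (S : Finset ι) : Set (E → ℂ) :=
  {h | Continuous h ∧ (∀ i, Function.Periodic h ((2 * π) • e i)) ∧
    ∀ i ∈ S, ∃ n ∈ Set.Icc (-D i) (D i), IsFourierMode (e i) n h}

/-- Functions that are trigonometric polynomials of degree at most `D i` in each of the directions
`e i` with `i ∈ S`. -/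
noncomputable def partialTrigPolyLE (e : ι → E) (D : ι → ℤ) (S : Finset ι) :
    Submodule ℂ (E → ℂ) :=
  Submodule.span ℂ (partialModes e D S)

lemma continuous_of_mem_partialTrigPolyLE (hg : g ∈ partialTrigPolyLE e D S) : Continuous g := by
  induction hg using Submodule.span_induction with
  | mem h hh => exact hh.1
  | zero => exact continuous_const
  | add h₁ h₂ _ _ ih₁ ih₂ => exact ih₁.add ih₂
  | smul c h _ ih => exact ih.const_smul c

variable [ContinuousAdd E] [ContinuousSMul ℝ E] [DecidableEq ι]

lemma dilatedFourierCoeff_mem_partialTrigPolyLE (hg : g ∈ partialModes e D S) {k : ℕ}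
    (hk : 0 < k) {m : ℤ} (hm : m ∈ Set.Icc (-D j) (D j)) :
    dilatedFourierCoeff (e j) k m g ∈ partialTrigPolyLE e D (insert j S) := by
  obtain ⟨hcont, hper, hmode⟩ := hg
  by_cases hdvd : (k : ℤ) ∣ m
  · obtain ⟨q, rfl⟩ := hdvd
    refine Submodule.subset_span ⟨continuous_dilatedFourierCoeff hcont _ _ _,
      fun i => periodic_dilatedFourierCoeff (hper i) _ _ _, fun i hi => ?_⟩
    obtain rfl | hiS := Finset.mem_insert.mp hi
    · have hq : |q| ≤ |k * q| := by
        rw [abs_mul, Nat.abs_cast]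
        exact le_mul_of_one_le_left (abs_nonneg q) (by exact_mod_cast hk)
      refine ⟨-q, abs_le.mp ?_, isFourierMode_dilatedFourierCoeff (hper i) hk q⟩
      exact (abs_neg q).trans_le (hq.trans (abs_le.mpr hm))
    · obtain ⟨n, hn, hgn⟩ := hmode i hiS
      exact ⟨n, hn, hgn.dilatedFourierCoeff _ _ _⟩
  · rw [dilatedFourierCoeff_eq_zero (hper j) hk hdvd]
    exact Submodule.zero_mem _

lemma jacksonMean_mem_partialTrigPolyLE {J : ℝ → ℝ} (hJ : Continuous J)
    (hJD : (fun t => (J t : ℂ)) ∈ trigPolyLE (D j)) (n : ℕ) (hg : g ∈ partialTrigPolyLE e D S) :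
    jacksonMean J (e j) n g ∈ partialTrigPolyLE e D (insert j S) := by
  obtain ⟨a, ha⟩ := exists_coeff_of_mem_trigPolyLE hJD
  induction hg using Submodule.span_induction with
  | mem h hh =>
    rw [jacksonMean_eq_sum ha (e j) n hh.1]
    exact Submodule.sum_mem _ fun m hm => Submodule.sum_mem _ fun k _ => Submodule.smul_mem _ _
      (dilatedFourierCoeff_mem_partialTrigPolyLE hh k.succ_pos (Finset.mem_Icc.mp hm))
  | zero =>
    rw [show jacksonMean J (e j) n (0 : E → ℂ) = 0 by funext x; simp [jacksonMean]]
    exact Submodule.zero_mem _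
  | add h₁ h₂ hh₁ hh₂ ih₁ ih₂ =>
    rw [jacksonMean_add hJ (continuous_of_mem_partialTrigPolyLE hh₁)
      (continuous_of_mem_partialTrigPolyLE hh₂)]
    exact Submodule.add_mem _ ih₁ ih₂
  | smul c h _ ih =>
    rw [jacksonMean_smul]
    exact Submodule.smul_mem _ c ih

end PartialTrigonometricPolynomials

section MultivariateTrigonometricPolynomials

variable {ι : Type*} [Fintype ι] [DecidableEq ι]

lemma eq_mul_exp_of_isFourierMode {h : (ι → ℝ) → ℂ} {n : ι → ℤ}
    (hn : ∀ j, IsFourierMode (Pi.single j 1) (n j) h) (x : ι → ℝ) :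
    h x = h 0 * Complex.exp (I * ∑ j, (n j : ℂ) * (x j : ℂ)) := by
  have hpartial (S : Finset ι) : h (∑ j ∈ S, x j • Pi.single j 1) =
      h 0 * Complex.exp (I * ∑ j ∈ S, (n j : ℂ) * (x j : ℂ)) := by
    induction S using Finset.induction_on with
    | empty => simp
    | insert j S hj ih =>
      rw [Finset.sum_insert hj, Finset.sum_insert hj, add_comm, hn, ih, mul_add, Complex.exp_add,
        mul_assoc I]
      ring
  simpa [← pi_eq_sum_univ' x] using hpartial Finset.univ

lemma exists_coeff_of_mem_partialTrigPolyLE {D : ι → ℤ} {h : (ι → ℝ) → ℂ}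
    (hh : h ∈ partialTrigPolyLE (fun j => Pi.single j (1 : ℝ)) D Finset.univ) :
    ∃ c : (ι → ℤ) → ℂ, ∀ x, h x = ∑ n ∈ Finset.Icc (fun j => -D j) D,
      c n * Complex.exp (I * ∑ j, (n j : ℂ) * (x j : ℂ)) := by
  have hspan : partialTrigPolyLE (fun j => Pi.single j (1 : ℝ)) D Finset.univ ≤
      Submodule.span ℂ ((fun (n : ι → ℤ) (x : ι → ℝ) =>
        Complex.exp (I * ∑ j, (n j : ℂ) * (x j : ℂ))) '' Finset.Icc (fun j => -D j) D) := by
    refine Submodule.span_le.mpr ?_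
    rintro g ⟨-, -, hmode⟩
    choose n hn hgn using fun j => hmode j (Finset.mem_univ j)
    rw [show g = g 0 • fun x => Complex.exp (I * ∑ j, (n j : ℂ) * (x j : ℂ)) from
      funext (eq_mul_exp_of_isFourierMode hgn)]
    refine Submodule.smul_mem _ _ (Submodule.subset_span ⟨n, ?_, rfl⟩)
    exact Finset.mem_coe.mpr (Finset.mem_Icc.mpr ⟨fun j => (hn j).1, fun j => (hn j).2⟩)
  obtain ⟨c, rfl⟩ := (Submodule.mem_span_image_finset_iff_exists_fun' _).mp (hspan hh)
  exact ⟨c, fun x => by simp only [Finset.sum_apply, Pi.smul_apply, smul_eq_mul]⟩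

end MultivariateTrigonometricPolynomials
section ModulusOfContinuity

lemma periodic_sum_zsmul {M α ι : Type*} [AddCommGroup M] {g : M → α} {v : ι → M}
    (hv : ∀ i, Function.Periodic g (v i)) (a : ι → ℤ) (S : Finset ι) :
    Function.Periodic g (∑ i ∈ S, a i • v i) := by
  induction S using Finset.cons_induction with
  | empty => simp [Function.Periodic]
  | cons i S hi ih =>
    rw [Finset.sum_cons]
    exact ((hv i).zsmul (a i)).add_period ih

lemma exists_norm_le_of_periodic {ι F : Type*} [Finite ι] [DecidableEq ι]
    [SeminormedAddCommGroup F] {g : (ι → ℝ) → F} (hg : Continuous g) {p : ι → ℝ} (hp : ∀ i, 0 < p i)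
    (hper : ∀ i, Function.Periodic g (p i • Pi.single i 1)) : ∃ B, ∀ x, ‖g x‖ ≤ B := by
  have := Fintype.ofFinite ι
  obtain ⟨B, hB⟩ :=
    (isCompact_Icc (a := 0) (b := p)).exists_bound_of_continuousOn hg.continuousOn
  refine ⟨B, fun x => ?_⟩
  have hreduce : x - ∑ i, toIcoDiv (hp i) 0 (x i) • p i • Pi.single i (1 : ℝ) =
      fun i => toIcoMod (hp i) 0 (x i) := by
    funext i
    simp [Finset.sum_apply, Pi.single_apply, -zsmul_eq_mul]
  rw [← (periodic_sum_zsmul hper _ _).sub_eq x, hreduce]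
  exact hB _ ⟨fun i => left_le_toIcoMod (hp i) 0 (x i),
    fun i => ((toIcoMod_lt_right (hp i) 0 (x i)).trans_eq (zero_add (p i))).le⟩

variable {d : ℕ} {g : (Fin d → ℝ) → ℝ} {B δ : ℝ}

lemma le_modulusOfContinuityMulti (hB : ∀ x, ‖g x‖ ≤ B) (x : Fin d → ℝ) {v : Fin d → ℝ}
    (hv : ‖v‖ < δ) : |g (x + v) - g x| ≤ modulusOfContinuityMulti g δ := by
  refine le_csSup ⟨B + B, ?_⟩ ⟨x, v, hv, rfl⟩
  rintro _ ⟨y, w, -, rfl⟩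
  exact (norm_sub_le _ _).trans (add_le_add (hB _) (hB _))

lemma modulusOfContinuityMulti_nonneg (g : (Fin d → ℝ) → ℝ) (δ : ℝ) :
    0 ≤ modulusOfContinuityMulti g δ := by
  refine Real.sSup_nonneg ?_
  rintro _ ⟨x, v, -, rfl⟩
  exact abs_nonneg _

lemma abs_sub_le_nsmul_modulusOfContinuityMulti (hB : ∀ x, ‖g x‖ ≤ B) (x : Fin d → ℝ)
    {v : Fin d → ℝ} (hv : ‖v‖ < δ) (n : ℕ) :
    |g (x + n • v) - g x| ≤ n * modulusOfContinuityMulti g δ := by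
  induction n with
  | zero => simp
  | succ n ih =>
    calc |g (x + (n + 1) • v) - g x|
        ≤ |g (x + n • v + v) - g (x + n • v)| + |g (x + n • v) - g x| := by
          rw [succ_nsmul, ← add_assoc]
          exact abs_sub_le _ _ _
      _ ≤ modulusOfContinuityMulti g δ + n * modulusOfContinuityMulti g δ :=
          add_le_add (le_modulusOfContinuityMulti hB _ hv) ih
      _ = (n + 1 : ℕ) * modulusOfContinuityMulti g δ := by
          push_cast
          ring

lemma abs_sub_le_mul_modulusOfContinuityMulti (hB : ∀ x, ‖g x‖ ≤ B) (hδ : 0 < δ)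
    (x v : Fin d → ℝ) : |g (x + v) - g x| ≤ (1 + ‖v‖ / δ) * modulusOfContinuityMulti g δ := by
  let n := ⌊‖v‖ / δ⌋₊ + 1
  have hn : (0 : ℝ) < n := by positivity
  have hn_le : (n : ℝ) ≤ 1 + ‖v‖ / δ := by
    rw [Nat.cast_succ, add_comm]
    gcongr
    exact Nat.floor_le (by positivity)
  have hlt : ‖(n : ℝ)⁻¹ • v‖ < δ := by
    rw [norm_smul, norm_inv, Real.norm_natCast, inv_mul_lt_iff₀ hn, ← div_lt_iff₀ hδ]
    exact_mod_cast Nat.lt_floor_add_one (‖v‖ / δ)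
  calc |g (x + v) - g x| = |g (x + n • (n : ℝ)⁻¹ • v) - g x| := by
        rw [← Nat.cast_smul_eq_nsmul ℝ, smul_inv_smul₀ hn.ne']
    _ ≤ n * modulusOfContinuityMulti g δ :=
        abs_sub_le_nsmul_modulusOfContinuityMulti hB x hlt n
    _ ≤ (1 + ‖v‖ / δ) * modulusOfContinuityMulti g δ := by
        gcongr
        exact modulusOfContinuityMulti_nonneg g δ

end ModulusOfContinuity

section PartialDerivatives

variable {d : ℕ} {g : (Fin d → ℝ) → ℝ}

lemma update_add_eq_add_smul_single {ι R : Type*} [DecidableEq ι] [Semiring R] (x : ι → R) (j : ι)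
    (s : R) : Function.update x j (x j + s) = x + s • Pi.single j 1 := by
  funext i
  obtain rfl | hij := eq_or_ne i j <;> simp [*]

lemma partialDerivVar_eq_lineDeriv (j : Fin d) (g : (Fin d → ℝ) → ℝ) (x : Fin d → ℝ) :
    partialDerivVar j g x = lineDeriv ℝ g x (Pi.single j 1) := by
  have hshift := deriv_comp_const_add (f := fun s => g (Function.update x j s)) (x j) 0
  simpa only [update_add_eq_add_smul_single, add_zero] using! hshift.symm

lemma hasLineDerivAt_partialDerivVar {j : Fin d} {x : Fin d → ℝ}
    (hg : DifferentiableAt ℝ (fun s => g (Function.update x j s)) (x j)) :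
    HasLineDerivAt ℝ g (partialDerivVar j g x) x (Pi.single j 1) := by
  have hshift := HasDerivAt.comp_const_add (f := fun s => g (Function.update x j s))
    (f' := partialDerivVar j g x) (x j) 0 (by rw [add_zero]; exact hg.hasDerivAt)
  simpa only [update_add_eq_add_smul_single] using! hshift

lemma periodic_partialDerivVar {v : Fin d → ℝ} (hg : Function.Periodic g v) (j : Fin d) :
    Function.Periodic (partialDerivVar j g) v := by
  intro x
  simp only [partialDerivVar_eq_lineDeriv, lineDeriv, add_right_comm x v, hg _]

lemma periodic_iterate_partialDerivVar {v : Fin d → ℝ} (hg : Function.Periodic g v) (j : Fin d)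
    (k : ℕ) : Function.Periodic ((partialDerivVar j)^[k] g) v := by
  induction k with
  | zero => exact hg
  | succ k ih =>
    rw [Function.iterate_succ_apply']
    exact periodic_partialDerivVar ih j

end PartialDerivatives
section JacksonOperator

/-- The degree `⌈(K + 3) / 2⌉ ⌊N / 2⌋` of the Jackson operator of smoothness `K` and scale `N`. -/
def jacksonDegree (K N : ℕ) : ℤ :=
  ((K + 3 + 1) / 2) * (N / 2)

/-- A constant bounding both the norm of the Jackson operator of smoothness `K` and its
approximation error. -/
noncomputable def jacksonConst (K : ℕ) : ℝ :=
  18 ^ (2 * ((K + 3 + 1) / 2)) * (π / 2) + (1 + 2 ^ (K + 1))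

/-- The Jackson operator of smoothness `K` and scale `N` in the direction `e`: the mean of
`(K + 1)`-point extrapolations against the kernel of order `⌈(K + 3) / 2⌉`, the least `r` with
`K + 3 ≤ 2 r`, as the moments of degree `K + 1` require. -/
noncomputable def jacksonOperator {E F : Type*} [AddCommGroup E] [Module ℝ E]
    [NormedAddCommGroup F] [NormedSpace ℝ F] (K N : ℕ) (e : E) (g : E → F) : E → F :=
  jacksonMean (jacksonKernel ((K + 3 + 1) / 2) (N / 2 + 1)) e (K + 1) g

lemma one_le_jacksonConst (K : ℕ) : 1 ≤ jacksonConst K := by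
  have hpow : (0 : ℝ) ≤ 18 ^ (2 * ((K + 3 + 1) / 2)) * (π / 2) + 2 ^ (K + 1) := by positivity
  rw [jacksonConst]
  linarith

lemma integral_jacksonKernel_mul_le_jacksonConst (K N : ℕ) :
    ∫ t in (-π)..π, jacksonKernel ((K + 3 + 1) / 2) (N / 2 + 1) t * (1 + N * |t|) ^ (K + 1) ≤
      jacksonConst K := by
  have hN : (N : ℝ) ≤ 2 * (N / 2 + 1 : ℕ) := by
    norm_cast
    lia
  refine (integral_jacksonKernel_mul_le (Nat.succ_pos _) (by lia) N.cast_nonneg hN).trans ?_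
  rw [jacksonConst]
  exact le_add_of_nonneg_right (by positivity)

variable {E F : Type*} [AddCommGroup E] [Module ℝ E] [TopologicalSpace E] [ContinuousAdd E]
  [ContinuousSMul ℝ E] [NormedAddCommGroup F] [NormedSpace ℝ F] [CompleteSpace F]
  {K N : ℕ} {e : E}

lemma norm_jacksonOperator_le {g : E → F} (hg : Continuous g) {B : ℝ} (hB : ∀ x, ‖g x‖ ≤ B)
    (x : E) : ‖jacksonOperator K N e g x‖ ≤ jacksonConst K * B := by
  have hB0 : 0 ≤ B := (norm_nonneg _).trans (hB x)
  refine (norm_jacksonMean_le (continuous_jacksonKernel _ _) (jacksonKernel_nonneg _ _)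
    (integral_jacksonKernel _ (by positivity)) hg hB x).trans ?_
  rw [jacksonConst]
  exact mul_le_mul_of_nonneg_right (le_add_of_nonneg_left (by positivity)) hB0

lemma norm_sub_jacksonOperator_le (hN : 0 < N) {g : ℕ → E → F} (hg0 : Continuous (g 0))
    (hg : ∀ k < K, ∀ x, HasLineDerivAt ℝ (g k) (g (k + 1) x) x e) {ω : ℝ}
    (hω : ∀ x (t : ℝ), ‖g K (x + t • e) - g K x‖ ≤ (1 + N * |t|) * ω) (x : E) :
    ‖g 0 x - jacksonOperator K N e (g 0) x‖ ≤ jacksonConst K * (ω / N ^ K) := by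
  have hω0 : 0 ≤ ω := by simpa using (norm_nonneg _).trans (hω x 0)
  have hdiff (t : ℝ) : ‖(fwdDiff (t • e))^[K + 1] (g 0) x‖ ≤
      (1 + N * |t|) ^ (K + 1) * (ω / N ^ K) := by
    have hiter := norm_fwdDiff_iter_smul_le (g := fun k => fwdDiff (t • e) (g k))
      (fun k hk => hasLineDerivAt_fwdDiff (hg k hk) _) (fun y => hω y t) t x
    calc ‖(fwdDiff (t • e))^[K + 1] (g 0) x‖ ≤ |t| ^ K * ((1 + N * |t|) * ω) := hiter
      _ = (N * |t|) ^ K * (1 + N * |t|) * (ω / N ^ K) := by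
          rw [mul_pow]
          field_simp
      _ ≤ (1 + N * |t|) ^ K * (1 + N * |t|) * (ω / N ^ K) := by
          gcongr
          exact le_add_of_nonneg_left zero_le_one
      _ = (1 + N * |t|) ^ (K + 1) * (ω / N ^ K) := by rw [pow_succ]
  refine (norm_sub_jacksonMean_le (continuous_jacksonKernel _ _) (jacksonKernel_nonneg _ _)
    (integral_jacksonKernel _ (by positivity)) hg0 (by fun_prop) hdiff).trans ?_
  simp only [← mul_assoc, intervalIntegral.integral_mul_const]
  gcongr
  exact integral_jacksonKernel_mul_le_jacksonConst K N

lemma norm_sub_jacksonOperator_le_of_norm_sub_le {f T : E → F} (hf : Continuous f)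
    (hT : Continuous T) {ε R : ℝ} {x : E}
    (hε : ‖f x - jacksonOperator K N e f x‖ ≤ jacksonConst K * ε) (hR : ∀ y, ‖f y - T y‖ ≤ R) :
    ‖f x - jacksonOperator K N e T x‖ ≤ jacksonConst K * (ε + R) := by
  have hadd : jacksonOperator K N e f x =
      jacksonOperator K N e (f - T) x + jacksonOperator K N e T x := by
    conv_lhs => rw [← sub_add_cancel f T]
    exact congr_fun (jacksonMean_add (continuous_jacksonKernel _ _) (hf.sub hT) hT) x
  calc ‖f x - jacksonOperator K N e T x‖
      = ‖(f x - jacksonOperator K N e f x) + jacksonOperator K N e (f - T) x‖ := by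
        rw [hadd]
        abel_nf
    _ ≤ jacksonConst K * ε + jacksonConst K * R :=
        (norm_add_le _ _).trans (add_le_add hε (norm_jacksonOperator_le (hf.sub hT) hR x))
    _ = jacksonConst K * (ε + R) := by ring

end JacksonOperator

section SuccessiveApproximation

variable {E ι : Type*} [AddCommGroup E] [Module ℝ E] [TopologicalSpace E] [ContinuousAdd E]
  [ContinuousSMul ℝ E] {e : ι → E} {K N : ι → ℕ} {S : Finset ι}

lemma jacksonOperator_mem_partialTrigPolyLE [DecidableEq ι] (j : ι) {T : E → ℝ}
    (hT : (fun x => (T x : ℂ)) ∈ partialTrigPolyLE e (fun i => jacksonDegree (K i) (N i)) S) :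
    (fun x => ((jacksonOperator (K j) (N j) (e j) T x : ℝ) : ℂ)) ∈
      partialTrigPolyLE e (fun i => jacksonDegree (K i) (N i)) (insert j S) := by
  have hkernel : (fun t => (jacksonKernel ((K j + 3 + 1) / 2) (N j / 2 + 1) t : ℂ)) ∈
      trigPolyLE (jacksonDegree (K j) (N j)) := by
    simpa [jacksonDegree] using jacksonKernel_mem_trigPolyLE ((K j + 3 + 1) / 2) (N j / 2)
  have hmem := jacksonMean_mem_partialTrigPolyLE (D := fun i => jacksonDegree (K i) (N i))
    (continuous_jacksonKernel _ _) hkernel (K j + 1) hT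
  exact (linearIsometry_comp_jacksonMean Complex.ofRealLI).symm.subst
    (motive := (· ∈ partialTrigPolyLE e _ (insert j S))) hmem

lemma exists_mem_partialTrigPolyLE_abs_sub_le {f : E → ℝ} (hf : Continuous f)
    (hper : ∀ i, Function.Periodic f ((2 * π) • e i)) {ε : ι → ℝ} (hε0 : ∀ j, 0 ≤ ε j)
    (hε : ∀ j x, ‖f x - jacksonOperator (K j) (N j) (e j) f x‖ ≤ jacksonConst (K j) * ε j)
    (S : Finset ι) : ∃ T : E → ℝ,
      (fun x => (T x : ℂ)) ∈ partialTrigPolyLE e (fun i => jacksonDegree (K i) (N i)) S ∧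
        ∀ x, |f x - T x| ≤ (∏ j ∈ S, jacksonConst (K j)) * ∑ j ∈ S, ε j := by
  classical
  induction S using Finset.induction_on with
  | empty =>
    refine ⟨f, Submodule.subset_span ⟨by fun_prop, fun i x => ?_, by simp⟩, by simp⟩
    simp only [hper i x]
  | insert j S hj ih =>
    obtain ⟨T, hT, hfT⟩ := ih
    have hTcont : Continuous T :=
      Complex.continuous_re.comp (continuous_of_mem_partialTrigPolyLE hT)
    have hprod : 1 ≤ ∏ i ∈ S, jacksonConst (K i) :=
      Finset.prod_induction _ (1 ≤ ·) (fun _ _ => one_le_mul_of_one_le_of_one_le) le_rfl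
        fun i _ => one_le_jacksonConst (K i)
    have hconst : 0 ≤ jacksonConst (K j) := zero_le_one.trans (one_le_jacksonConst (K j))
    refine ⟨jacksonOperator (K j) (N j) (e j) T, jacksonOperator_mem_partialTrigPolyLE j hT,
      fun x => ?_⟩
    rw [Finset.prod_insert hj, Finset.sum_insert hj, mul_assoc, mul_add]
    refine (norm_sub_jacksonOperator_le_of_norm_sub_le hf hTcont (hε j x) hfT).trans ?_
    gcongr
    exact le_mul_of_one_le_left (hε0 j) hprod

end SuccessiveApproximation

lemma norm_sub_jacksonOperator_le_modulusOfContinuityMulti {d K N : ℕ} (hN : 0 < N) {j : Fin d}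
    {f : (Fin d → ℝ) → ℝ} (hf : Continuous f)
    (hper : ∀ i, Function.Periodic f ((2 * π) • Pi.single i 1))
    (hdiff : ∀ k < K, ∀ x, DifferentiableAt ℝ
      (fun s => (partialDerivVar j)^[k] f (Function.update x j s)) (x j))
    (hcont : Continuous ((partialDerivVar j)^[K] f)) (x : Fin d → ℝ) :
    ‖f x - jacksonOperator K N (Pi.single j 1) f x‖ ≤ jacksonConst K *
      (modulusOfContinuityMulti ((partialDerivVar j)^[K] f) (1 / N) / N ^ K) := by
  obtain ⟨B, hB⟩ := exists_norm_le_of_periodic hcont (fun _ => Real.two_pi_pos)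
    fun i => periodic_iterate_partialDerivVar (hper i) j K
  refine norm_sub_jacksonOperator_le hN (g := fun k => (partialDerivVar j)^[k] f) hf
    (fun k hk y => ?_) (fun y t => ?_) x
  · rw [Function.iterate_succ_apply']
    exact hasLineDerivAt_partialDerivVar (hdiff k hk y)
  · have hmod := abs_sub_le_mul_modulusOfContinuityMulti hB (δ := 1 / N) (by positivity) y
      (t • Pi.single j 1)
    rwa [norm_smul, Pi.norm_single, norm_one, mul_one, Real.norm_eq_abs,
      div_div_eq_mul_div, div_one, mul_comm |t|] at hmod

/-- The multivariate Jackson inequality: for each `K ∈ ℕ₀^d` there is `C_K > 0`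
(independent of `f`) such that every continuous, coordinatewise `2π`-periodic
`f : ℝ^d → ℝ` with continuous partial derivatives `∂_j^{K_j} f` can, for each
`N ∈ ℕ^d`, be approximated by a real multivariate trigonometric polynomial of
coordinatewise degree at most `⌈(K_j+3)/2⌉⌊N_j/2⌋` with uniform error
`≤ C_K ∑_j ω_{∂_j^{K_j} f}(1/N_j)/N_j^{K_j}`. -/
theorem jackson_inequality_multivariate (d : ℕ) (hd : 1 ≤ d) (K : Fin d → ℕ) :
    ∃ C : ℝ, 0 < C ∧
      ∀ f : (Fin d → ℝ) → ℝ, Continuous f →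
        (∀ (j : Fin d) (x : Fin d → ℝ), f (Function.update x j (x j + 2 * π)) = f x) →
        (∀ (j : Fin d) (k : ℕ), k < K j → ∀ x : Fin d → ℝ,
          DifferentiableAt ℝ
            (fun s => ((partialDerivVar j)^[k] f) (Function.update x j s)) (x j)) →
        (∀ j : Fin d, Continuous ((partialDerivVar j)^[K j] f)) →
        ∀ N : Fin d → ℕ, (∀ j, 1 ≤ N j) →
          ∃ c : (Fin d → ℤ) → ℂ,
            (∀ x : Fin d → ℝ,
              (∑ n ∈ Finset.Icc (fun j => -(((K j + 3 + 1) / 2) * (N j / 2) : ℤ))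
                  (fun j => (((K j + 3 + 1) / 2) * (N j / 2) : ℤ)),
                c n * Complex.exp (Complex.I * ∑ j, (n j : ℂ) * (x j : ℂ))).im = 0) ∧
            ∀ x : Fin d → ℝ,
              |f x - (∑ n ∈ Finset.Icc (fun j => -(((K j + 3 + 1) / 2) * (N j / 2) : ℤ))
                  (fun j => (((K j + 3 + 1) / 2) * (N j / 2) : ℤ)),
                c n * Complex.exp (Complex.I * ∑ j, (n j : ℂ) * (x j : ℂ))).re|
                ≤ C * ∑ j, modulusOfContinuityMulti ((partialDerivVar j)^[K j] f) (1 / N j)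
                    / (N j : ℝ) ^ (K j) := by
  refine ⟨∏ j, jacksonConst (K j), Finset.prod_pos fun j _ =>
    zero_lt_one.trans_le (one_le_jacksonConst (K j)), fun f hf hper hdiff hcont N hN => ?_⟩
  simp only [update_add_eq_add_smul_single] at hper
  obtain ⟨T, hT, hfT⟩ := exists_mem_partialTrigPolyLE_abs_sub_le hf hper
    (fun j => div_nonneg (modulusOfContinuityMulti_nonneg _ _) (by positivity))
    (fun j => norm_sub_jacksonOperator_le_modulusOfContinuityMulti (hN j) hf hper (hdiff j)
      (hcont j)) Finset.univ
  obtain ⟨c, hc⟩ := exists_coeff_of_mem_partialTrigPolyLE hT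
  refine ⟨c, fun x => ?_, fun x => ?_⟩
  · exact (congr_arg Complex.im (hc x)).symm.trans (Complex.ofReal_im _)
  · refine le_of_eq_of_le ?_ (hfT x)
    exact congr_arg (|f x - ·|) ((congr_arg Complex.re (hc x)).symm.trans (Complex.ofReal_re _))
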